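/- Let Δ ≥ 4 be an even integer and let t be an integer with 1 ≤ t ≤ Δ−2. Let c be a proper edge-coloring of the multigraph H^Δ_t, and let Γ be the simple graph whose vertices are the palettes P_c(v_j) for j ∈ {0,…,Δ−1}, with two palettes P ≠ Q adjacent if and only if there exists an even index j with {P, Q} = {P_c(v_j), P_c(v_{j+1})}. Then for every palette P occurring among the non-central vertices, the degree of P in Γ equals the number of indices j ∈ {0,…,Δ−1} with P_c(v_j) = P. -/

import Mathlib

/-- A proper edge-coloring of a multigraph given by an edge-index type `E`,
a vertex type `V` and an endpoints map `ends : E → Sym2 V`: distinct edges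
sharing an endpoint receive distinct colors. -/
def MG.Proper {E V C : Type*} (ends : E → Sym2 V) (c : E → C) : Prop :=
  ∀ e₁ e₂ : E, e₁ ≠ e₂ → (∃ x : V, x ∈ ends e₁ ∧ x ∈ ends e₂) → c e₁ ≠ c e₂

/-- The palette of a vertex: the set of colors of the edges incident with it. -/
def MG.palette {E V C : Type*} (ends : E → Sym2 V) (c : E → C) (x : V) : Set C :=
  {γ : C | ∃ e : E, x ∈ ends e ∧ c e = γ}

/-- The multigraph `H^Δ_t`: vertices are `none` (the center `u`) and `some j`
(the vertex `v_j`), edges are the spokes `e_j = u v_j` together with `t`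
parallel edges between `v_{2i}` and `v_{2i+1}`. -/
def Hends (Δ t : ℕ) : (Fin Δ ⊕ Fin (Δ / 2) × Fin t) → Sym2 (Option (Fin Δ))
  | Sum.inl j => s(none, some j)
  | Sum.inr (i, _) =>
      s(some ⟨2 * i.1, by have := i.2; omega⟩, some ⟨2 * i.1 + 1, by have := i.2; omega⟩)

/-- The partner `j'` of an index `j`: `j+1` if `j` is even, `j-1` if `j` is odd. -/
def partner {Δ : ℕ} (hΔ : 2 ∣ Δ) (j : Fin Δ) : Fin Δ :=
  ⟨if j.1 % 2 = 0 then j.1 + 1 else j.1 - 1, by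
    obtain ⟨k, hk⟩ := hΔ; have := j.2; split <;> omega⟩

/-! The palettes of `v_j` and of its partner `v_{j'}` share the colors of the `t` parallel edges and
differ exactly in the colors of the two spokes, so `P(v_j) \ P(v_{j'}) = {c(e_j)}`. The spokes have
pairwise distinct colors, hence `j` is determined by the ordered pair `(P(v_j), P(v_{j'}))`: among
the indices with `P(v_j) = P`, the map `j ↦ P(v_{j'})` is a bijection onto the neighbors of `P`. -/

section PairGraph

variable {ι α : Type*} {p : ι → α} {σ : ι → ι} {r : ι → Prop}

/-- The simple graph on the values of a family `p`, joining the distinct values among `p i` and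
`p (σ i)` for each `i` satisfying `r`. When `σ` is an involution, `r` selects which element of each
pair `{i, σ i}` represents it. The graph `Γ` of palettes is the case `p j = P_c(v_j)`, `σ = partner`
and `r j = (j is even)`. -/
def pairGraph (p : ι → α) (σ : ι → ι) (r : ι → Prop) : SimpleGraph {a : α // ∃ i, p i = a} :=
  SimpleGraph.fromRel fun a b => ∃ i, r i ∧ a.1 = p i ∧ b.1 = p (σ i)

theorem pairGraph_adj_iff (hσ : Function.Involutive σ) (hr : ∀ i, r i ∨ r (σ i))
    {a b : {a : α // ∃ i, p i = a}} :
    (pairGraph p σ r).Adj a b ↔ a ≠ b ∧ ∃ i, p i = a.1 ∧ p (σ i) = b.1 := by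
  rw [pairGraph, SimpleGraph.fromRel_adj]
  refine and_congr_right fun _ => ⟨?_, ?_⟩
  · rintro (⟨i, -, ha, hb⟩ | ⟨i, -, hb, ha⟩)
    · exact ⟨i, ha.symm, hb.symm⟩
    · exact ⟨σ i, ha.symm, by rw [hσ i, hb]⟩
  · rintro ⟨i, ha, hb⟩
    rcases hr i with hi | hi
    · exact .inl ⟨i, hi, ha.symm, hb.symm⟩
    · exact .inr ⟨σ i, hi, hb.symm, by rw [hσ i, ha]⟩

theorem ncard_neighborSet_pairGraph (hσ : Function.Involutive σ) (hr : ∀ i, r i ∨ r (σ i))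
    (hne : ∀ i, p i ≠ p (σ i)) (hinj : Function.Injective fun i => (p i, p (σ i)))
    (a : {a : α // ∃ i, p i = a}) :
    ((pairGraph p σ r).neighborSet a).ncard = {i | p i = a.1}.ncard := by
  symm
  refine Set.ncard_congr (fun i _ => ⟨p (σ i), σ i, rfl⟩) ?maps_to ?inj_on ?surj_on
  case maps_to =>
    intro i (hi : p i = a.1)
    refine (pairGraph_adj_iff hσ hr).2 ⟨fun h => hne i ?_, i, hi, rfl⟩
    exact hi.trans (congrArg Subtype.val h)
  case inj_on =>
    intro i j (hi : p i = a.1) (hj : p j = a.1) hij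
    exact hinj (Prod.ext (hi.trans hj.symm) (congrArg Subtype.val hij))
  case surj_on =>
    intro b hb
    obtain ⟨-, i, hi, hib⟩ := (pairGraph_adj_iff hσ hr).1 hb
    exact ⟨i, hi, Subtype.ext hib⟩

end PairGraph

section Multigraph

variable {E V C : Type*} {ends : E → Sym2 V} {c : E → C}

theorem MG.Proper.injOn_incident (hc : MG.Proper ends c) (x : V) :
    Set.InjOn c {e | x ∈ ends e} := fun e he f hf h =>
  by_contra fun hne => hc e f hne ⟨x, he, hf⟩ h

theorem MG.Proper.palette_sdiff_palette (hc : MG.Proper ends c) {x y : V} {e : E}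
    (hx : x ∈ ends e) (hy : y ∉ ends e) (hxy : ∀ f ≠ e, x ∈ ends f → y ∈ ends f)
    (hmeet : ∀ f, y ∈ ends f → ∃ z, z ∈ ends f ∧ z ∈ ends e) :
    MG.palette ends c x \ MG.palette ends c y = {c e} := by
  refine Set.eq_singleton_iff_unique_mem.2 ⟨⟨⟨e, hx, rfl⟩, ?_⟩, ?_⟩
  · rintro ⟨f, hf, hfe⟩
    have hne : f ≠ e := fun h => hy (h ▸ hf)
    exact hc f e hne (hmeet f hf) hfe
  · rintro _ ⟨⟨f, hf, rfl⟩, hfy⟩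
    by_contra hne
    exact hfy ⟨f, hxy f (fun h => hne (congrArg c h)) hf, rfl⟩

end Multigraph

section Partner

variable {Δ : ℕ} (hev : 2 ∣ Δ)

theorem partner_involutive : Function.Involutive (partner hev) := by
  intro j
  simp only [partner, Fin.ext_iff]
  split_ifs <;> omega

theorem partner_ne (j : Fin Δ) : partner hev j ≠ j := by
  simp only [partner, ne_eq, Fin.ext_iff]
  split_ifs <;> omega

theorem even_or_even_partner (j : Fin Δ) : j.1 % 2 = 0 ∨ (partner hev j).1 % 2 = 0 := by
  simp only [partner]
  split_ifs <;> omega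

end Partner

section Hends

variable {Δ t : ℕ} {C : Type*} {c : Fin Δ ⊕ Fin (Δ / 2) × Fin t → C}

theorem none_mem_Hends_inl (k : Fin Δ) : none ∈ Hends Δ t (Sum.inl k) :=
  Sym2.mem_mk_left _ _

theorem some_mem_Hends_inl_iff {j k : Fin Δ} : some j ∈ Hends Δ t (Sum.inl k) ↔ j = k := by
  simp [Hends]

theorem some_partner_mem_Hends_inr_iff (hev : 2 ∣ Δ) {j : Fin Δ} {q : Fin (Δ / 2) × Fin t} :
    some (partner hev j) ∈ Hends Δ t (Sum.inr q) ↔ some j ∈ Hends Δ t (Sum.inr q) := by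
  simp only [Hends, Sym2.mem_iff, Option.some.injEq, Fin.ext_iff, partner]
  split_ifs <;> omega

theorem MG.Proper.injective_spoke (hc : MG.Proper (Hends Δ t) c) :
    Function.Injective fun j => c (Sum.inl j) := fun j k h =>
  Sum.inl_injective <|
    hc.injOn_incident none (none_mem_Hends_inl j) (none_mem_Hends_inl k) h

theorem MG.Proper.palette_sdiff_palette_partner (hc : MG.Proper (Hends Δ t) c) (hev : 2 ∣ Δ)
    (j : Fin Δ) :
    MG.palette (Hends Δ t) c (some j) \ MG.palette (Hends Δ t) c (some (partner hev j)) =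
      {c (Sum.inl j)} := by
  have hj : some j ∈ Hends Δ t (Sum.inl j) := some_mem_Hends_inl_iff.2 rfl
  refine hc.palette_sdiff_palette hj (mt some_mem_Hends_inl_iff.1 (partner_ne hev j)) ?_ ?_
  · rintro (k | q) hne hk
    · exact absurd (congrArg Sum.inl (some_mem_Hends_inl_iff.1 hk).symm) hne
    · exact (some_partner_mem_Hends_inr_iff hev).2 hk
  · rintro (k | q) hk
    · exact ⟨none, none_mem_Hends_inl k, none_mem_Hends_inl j⟩
    · exact ⟨some j, (some_partner_mem_Hends_inr_iff hev).1 hk, hj⟩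

theorem MG.Proper.palette_ne_palette_partner (hc : MG.Proper (Hends Δ t) c) (hev : 2 ∣ Δ)
    (j : Fin Δ) :
    MG.palette (Hends Δ t) c (some j) ≠ MG.palette (Hends Δ t) c (some (partner hev j)) := by
  intro h
  have hdiff := hc.palette_sdiff_palette_partner hev j
  rw [h, sdiff_self] at hdiff
  exact Set.singleton_ne_empty _ hdiff.symm

theorem MG.Proper.injective_palette_palette_partner (hc : MG.Proper (Hends Δ t) c)
    (hev : 2 ∣ Δ) :
    Function.Injective fun j : Fin Δ =>
      (MG.palette (Hends Δ t) c (some j), MG.palette (Hends Δ t) c (some (partner hev j))) := by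
  intro j k h
  obtain ⟨hpal, hpartner⟩ := Prod.ext_iff.1 h
  have hdiff := congrArg₂ (· \ ·) hpal hpartner
  simp only [hc.palette_sdiff_palette_partner hev] at hdiff
  exact hc.injective_spoke (Set.singleton_injective hdiff)

end Hends

theorem palette_graph_degree_general {Δ t : ℕ} (hev : 2 ∣ Δ) {C : Type*}
    (c : (Fin Δ ⊕ Fin (Δ / 2) × Fin t) → C) (hc : MG.Proper (Hends Δ t) c)
    (P : {P : Set C // ∃ j : Fin Δ, MG.palette (Hends Δ t) c (some j) = P}) :
    ((SimpleGraph.fromRel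
      (fun P Q : {P : Set C // ∃ j : Fin Δ, MG.palette (Hends Δ t) c (some j) = P} =>
        ∃ j : Fin Δ, j.1 % 2 = 0 ∧
          P.1 = MG.palette (Hends Δ t) c (some j) ∧
          Q.1 = MG.palette (Hends Δ t) c (some (partner hev j)))).neighborSet P).ncard =
      {j : Fin Δ | MG.palette (Hends Δ t) c (some j) = P.1}.ncard :=
  ncard_neighborSet_pairGraph (partner_involutive hev) (even_or_even_partner hev)
    (hc.palette_ne_palette_partner hev) (hc.injective_palette_palette_partner hev) P

/-- in the simple graph `Γ` on the palettes of the non-central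
vertices of `H^Δ_t` (two distinct palettes being adjacent iff they are the
palettes of `v_j` and `v_{j+1}` for some even `j`), the degree of each palette
`P` equals the number of indices `j` with `P_c(v_j) = P`. -/
theorem palette_graph_degree {Δ t : ℕ} (hΔ : 4 ≤ Δ) (hev : 2 ∣ Δ)
    (ht1 : 1 ≤ t) (ht2 : t ≤ Δ - 2) {C : Type*}
    (c : (Fin Δ ⊕ Fin (Δ / 2) × Fin t) → C) (hc : MG.Proper (Hends Δ t) c)
    (P : {P : Set C // ∃ j : Fin Δ, MG.palette (Hends Δ t) c (some j) = P}) :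
    ((SimpleGraph.fromRel
      (fun P Q : {P : Set C // ∃ j : Fin Δ, MG.palette (Hends Δ t) c (some j) = P} =>
        ∃ j : Fin Δ, j.1 % 2 = 0 ∧
          P.1 = MG.palette (Hends Δ t) c (some j) ∧
          Q.1 = MG.palette (Hends Δ t) c (some (partner hev j)))).neighborSet P).ncard =
      {j : Fin Δ | MG.palette (Hends Δ t) c (some j) = P.1}.ncard :=
  palette_graph_degree_general hev c hc P
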